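/- Let L be a first-order language extending the language of rings, and let M be an L-structure whose universe F, equipped with the interpretations of the ring symbols, is a field. Assume Th(M) has finite burden. Then for every definable infinite set X ⊆ F, the field F is a finite extension of the subfield of F generated by X; that is, F is finite-dimensional as a vector space over the subfield generated by X. -/

import Mathlib

/- Common model-theoretic definitions. -/

open FirstOrder Set

universe u v w

/-- An inp-pattern of depth `κ` in `nvars` free variables witnessed in the `L`-structure `N`:
formulas `φ α (x̄; ȳ_α)` (with `m α` parameter variables), positive integers `k α`, and
parameter tuples `b α i` such that each row is `k α`-inconsistent (no tuple of `N` realizes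
`φ α (x̄; b α i)` for `k α` distinct values of `i`), while every path is finitely consistent. -/
def IsInpPattern (L : FirstOrder.Language.{u, v}) (N : Type*) [L.Structure N]
    (κ : Type*) (nvars : ℕ) : Prop :=
  ∃ (m : κ → ℕ) (φ : ∀ α : κ, L.Formula (Fin nvars ⊕ Fin (m α)))
    (k : κ → ℕ) (b : ∀ α : κ, ℕ → Fin (m α) → N),
    (∀ α, 1 ≤ k α) ∧
    (∀ α : κ, ¬ ∃ (x : Fin nvars → N) (s : Finset ℕ),
        k α ≤ s.card ∧ ∀ i ∈ s, (φ α).Realize (Sum.elim x (b α i))) ∧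
    (∀ (η : κ → ℕ) (S : Finset κ), ∃ x : Fin nvars → N,
        ∀ α ∈ S, (φ α).Realize (Sum.elim x (b α (η α))))

/-- `Th(M)` has burden at least `n`: some model of `Th(M)` witnesses an inp-pattern of
depth `n` in a single variable. -/
def HasBurdenAtLeast (L : FirstOrder.Language.{u, v}) (M : Type w) [L.Structure M]
    (n : ℕ) : Prop :=
  ∃ N : FirstOrder.Language.Theory.ModelType.{u, v, max u v w} (L.completeTheory M),
    IsInpPattern L N (Fin n) 1

/-- `Th(M)` has finite burden: for some `n`, no model of `Th(M)` witnesses an inp-pattern of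
depth `n + 1` in a single variable. -/
def HasFiniteBurden (L : FirstOrder.Language.{u, v}) (M : Type w) [L.Structure M] : Prop :=
  ∃ n : ℕ, ¬ HasBurdenAtLeast L M (n + 1)

/-- `Th(M)` is strong: no model of `Th(M)` witnesses an inp-pattern of depth `ω` in any
finite tuple of variables. -/
def IsStrong (L : FirstOrder.Language.{u, v}) (M : Type w) [L.Structure M] : Prop :=
  ∀ (N : FirstOrder.Language.Theory.ModelType.{u, v, max u v w} (L.completeTheory M))
    (nvars : ℕ), ¬ IsInpPattern L N ℕ nvars

/-- A set `D` in a linear order is discrete if each of its points is isolated in it. -/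
def DiscreteIn {R : Type*} [LinearOrder R] (D : Set R) : Prop :=
  ∀ x ∈ D, ∃ a b : R, a < x ∧ x < b ∧ Set.Ioo a b ∩ D = {x}

/-- `M` is definably complete: every nonempty definable subset of `R` that is bounded above
has a least upper bound. -/
def DefinablyComplete (L : FirstOrder.Language.{u, v}) (R : Type w)
    [LinearOrder R] [L.Structure R] : Prop :=
  ∀ X : Set R, (Set.univ : Set R).Definable₁ L X → X.Nonempty → BddAbove X →
    ∃ a : R, IsLUB X a

/-
Let `a₁, …, aₙ` be linearly independent over the subfield generated by `X`. Then
`(x₁, …, xₙ) ↦ ∑ xᵢ * aᵢ` is a definable map `Fⁿ → F` that is injective on `Xⁿ`. Fix distinct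
`c₀, c₁, … ∈ X` and let the `j`-th formula of row `i` say that `y` is the image of some `x ∈ Xⁿ`
with `xᵢ = c_j`. By injectivity each row is `2`-inconsistent, and the path `η` is realized by the
image of `(c_η(1), …, c_η(n))`. Hence the dimension of `F` is bounded by the burden.
-/

section Definability

variable {L : FirstOrder.Language.{u, v}} {M : Type w} [L.Structure M]

theorem exists_formula_of_definable {α β : Type*} [Finite β] {D : Set (α ⊕ β → M)}
    (hD : (univ : Set M).Definable L D) :
    ∃ (m : ℕ) (φ : L.Formula (α ⊕ Fin m)) (b : (β → M) → Fin m → M),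
      ∀ x y, φ.Realize (Sum.elim x (b y)) ↔ Sum.elim x y ∈ D := by
  obtain ⟨A, -, hA⟩ := definable_iff_finitely_definable.1 hD
  obtain ⟨ψ, rfl⟩ := definable_iff_exists_formula_sum.1 hA
  obtain ⟨m, ⟨e⟩⟩ := Finite.exists_equiv_fin ((A : Set M) ⊕ β)
  let r : (A : Set M) ⊕ (α ⊕ β) → α ⊕ Fin m :=
    Sum.elim (Sum.inr ∘ e ∘ Sum.inl) (Sum.map id (e ∘ Sum.inr))
  refine ⟨m, ψ.relabel r, fun y => Sum.elim (↑) y ∘ e.symm, fun x y => ?_⟩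
  have hr : Sum.elim x (Sum.elim (↑) y ∘ e.symm) ∘ r = Sum.elim (↑) (Sum.elim x y) := by
    ext (a | a | b) <;> simp [r]
  rw [Language.Formula.realize_relabel, hr, mem_ofPred_eq]

variable {A : Set M}

theorem definable_univ_pi {ι : Type*} [Finite ι] {X : ι → Set M}
    (hX : ∀ i, A.Definable₁ L (X i)) : A.Definable L (univ.pi X) := by
  rw [pi_def, biInter_univ]
  exact definable_iInter_of_finite fun i => (hX i).preimage_comp fun _ => i

theorem definableFun_op₂ {α : Type*} {op : M → M → M}
    (hop : A.Definable L {v : Fin 3 → M | op (v 0) (v 1) = v 2})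
    {f g : (α → M) → M} (hf : A.DefinableFun L f) (hg : A.DefinableFun L g) :
    A.DefinableFun L fun v => op (f v) (g v) := by
  have hop' : A.DefinableFun L fun v : Fin 2 → M => op (v 0) (v 1) :=
    hop.preimage_comp ![some 0, some 1, none]
  exact hop'.comp (g := fun v => ![f v, g v]) (Fin.forall_fin_two.2 ⟨hf, hg⟩)

theorem definableFun_sum {α ι : Type*} [AddCommMonoid M]
    (hadd : A.Definable L {v : Fin 3 → M | v 0 + v 1 = v 2}) (hzero : (0 : M) ∈ A)
    {f : ι → (α → M) → M} (hf : ∀ i, A.DefinableFun L (f i)) (s : Finset ι) :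
    A.DefinableFun L fun v => ∑ i ∈ s, f i v := by
  induction s using Finset.cons_induction with
  | empty => simpa only [Finset.sum_empty] using L.definableFun_const α hzero
  | cons i s hi ih => simpa only [Finset.sum_cons] using definableFun_op₂ hadd (hf i) ih

/-- The pairs `(f x, x i)`, for `x` in the product of the sets `X j`; the two coordinates of a pair
are indexed by `Fin 1 ⊕ Fin 1` to separate the object variable from the parameter variable. -/
def imageCoordGraph {ι : Type*} (f : (ι → M) → M) (X : ι → Set M) (i : ι) :
    Set (Fin 1 ⊕ Fin 1 → M) :=
  {v | ∃ x ∈ univ.pi X, f x = v (Sum.inl 0) ∧ x i = v (Sum.inr 0)}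

theorem definable_imageCoordGraph {ι : Type*} [Finite ι] {f : (ι → M) → M} {X : ι → Set M}
    (hf : A.DefinableFun L f) (hX : ∀ i, A.Definable₁ L (X i)) (i : ι) :
    A.Definable L (imageCoordGraph f X i) := by
  have hmem : A.Definable L {w : (Fin 1 ⊕ Fin 1) ⊕ ι → M | w ∘ Sum.inr ∈ univ.pi X} :=
    (definable_univ_pi hX).preimage_comp Sum.inr
  have himage : A.Definable L
      {w : (Fin 1 ⊕ Fin 1) ⊕ ι → M | f (w ∘ Sum.inr) = w (Sum.inl (Sum.inl 0))} :=
    (hf.comp fun _ => DefinableFun.proj L).ofPred_eq (DefinableFun.proj L)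
  have hcoord : A.Definable L
      {w : (Fin 1 ⊕ Fin 1) ⊕ ι → M | w (Sum.inr i) = w (Sum.inl (Sum.inr 0))} :=
    (DefinableFun.proj L).ofPred_eq (DefinableFun.proj L)
  exact (hmem.inter (himage.inter hcoord)).exists_of_finite

end Definability

namespace IsInpPattern

variable {L : FirstOrder.Language.{u, v}}

theorem of_definable {M : Type w} [L.Structure M] {κ β : Type*} [Finite β] {nvars : ℕ}
    {D : κ → Set (Fin nvars ⊕ β → M)} (hD : ∀ α, (univ : Set M).Definable L (D α))
    (k : κ → ℕ) (b : κ → ℕ → β → M)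
    (hrow : ∀ α x (s : Finset ℕ), (∀ i ∈ s, Sum.elim x (b α i) ∈ D α) → s.card < k α)
    (hpath : ∀ (η : κ → ℕ) (S : Finset κ), ∃ x, ∀ α ∈ S, Sum.elim x (b α (η α)) ∈ D α) :
    IsInpPattern L M κ nvars := by
  choose m φ c hφ using fun α => exists_formula_of_definable (hD α)
  refine ⟨m, φ, k, fun α i => c α (b α i), fun α => ?_, ?_, fun η S => ?_⟩
  · obtain ⟨x, -⟩ := hpath 0 ∅
    exact hrow α x ∅ (by simp)
  · rintro α ⟨x, s, hs, hx⟩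
    exact (hrow α x s fun i hi => (hφ α x _).1 (hx i hi)).not_ge hs
  · obtain ⟨x, hx⟩ := hpath η S
    exact ⟨x, fun α hα => (hφ α x _).2 (hx α hα)⟩

theorem of_injOn_univ_pi {M : Type w} [L.Structure M] {ι : Type*} [Finite ι]
    {f : (ι → M) → M} {X : ι → Set M} (hf : (univ : Set M).DefinableFun L f)
    (hX : ∀ i, (univ : Set M).Definable₁ L (X i)) (hXinf : ∀ i, (X i).Infinite)
    (hinj : InjOn f (univ.pi X)) : IsInpPattern L M ι 1 := by
  let c : ∀ i, ℕ ↪ X i := fun i => (hXinf i).natEmbedding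
  refine of_definable (definable_imageCoordGraph hf hX) (fun _ => 2) (fun i j _ => c i j) ?_ ?_
  · intro i y s hs
    refine Nat.lt_succ_of_le (Finset.card_le_one.2 fun j hj j' hj' => (c i).injective ?_)
    obtain ⟨x, hx, hxy, hxc⟩ := hs j hj
    obtain ⟨x', hx', hxy', hxc'⟩ := hs j' hj'
    have hxx' : x = x' := hinj hx hx' (hxy.trans hxy'.symm)
    exact Subtype.ext (hxc.symm.trans ((congrFun hxx' i).trans hxc'))
  · intro η _
    exact ⟨fun _ => f fun i => c i (η i),
      fun i _ => ⟨fun i => c i (η i), fun i _ => (c i (η i)).2, rfl, rfl⟩⟩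

theorem of_equiv {M N : Type*} [L.Structure M] [L.Structure N] (e : M ≃[L] N)
    {κ : Type*} {nvars : ℕ} (h : IsInpPattern L M κ nvars) : IsInpPattern L N κ nvars := by
  obtain ⟨m, φ, k, b, hk, hrow, hpath⟩ := h
  have realize_iff (α) (x : Fin nvars → M) (i) :
      (φ α).Realize (Sum.elim (e ∘ x) (e ∘ b α i)) ↔ (φ α).Realize (Sum.elim x (b α i)) := by
    rw [← Sum.comp_elim, Language.StrongHomClass.realize_formula]
  refine ⟨m, φ, k, fun α i => e ∘ b α i, hk, ?_, fun η S => ?_⟩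
  · rintro α ⟨y, s, hs, hy⟩
    obtain ⟨x, rfl⟩ := e.surjective.comp_left y
    exact hrow α ⟨x, s, hs, fun i hi => (realize_iff α x i).1 (hy i hi)⟩
  · obtain ⟨x, hx⟩ := hpath η S
    exact ⟨e ∘ x, fun α hα => (realize_iff α x _).2 (hx α hα)⟩

theorem hasBurdenAtLeast {M : Type w} [L.Structure M] {n : ℕ}
    (h : IsInpPattern L M (Fin n) 1) : HasBurdenAtLeast L M n := by
  have : Nonempty M := by
    obtain ⟨_, _, _, _, _, _, hpath⟩ := h
    exact (hpath 0 ∅).nonempty.map (· 0)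
  -- `HasBurdenAtLeast` only considers models in the universe `max u v w`.
  let N := Language.Theory.ModelType.of (L.completeTheory M) M
  let : L.Structure (ULift.{max u v} M) := Equiv.ulift.symm.inducedStructure
  exact ⟨Language.Theory.ModelType.ulift.{u, v, w, max u v} N,
    h.of_equiv Equiv.ulift.symm.inducedStructureEquiv⟩

end IsInpPattern

theorem injOn_sum_mul_of_linearIndependent {R S ι : Type*} [Semiring R] [SetLike S R]
    [SubsemiringClass S R] [Fintype ι] {K : S} {a : ι → R} (ha : LinearIndependent K a) :
    InjOn (fun x : ι → R => ∑ i, x i * a i) (univ.pi fun _ => K) := by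
  intro x hx y hy hxy
  lift x to ι → K using fun i => hx i (mem_univ i)
  lift y to ι → K using fun i => hy i (mem_univ i)
  exact funext fun i => congrArg Subtype.val (Fintype.linearIndependent_iffₛ.1 ha x y hxy i)

theorem statement_0_general {L : FirstOrder.Language.{u, v}} {F : Type w} [DivisionRing F]
    [L.Structure F]
    (hadd : (univ : Set F).Definable L {v : Fin 3 → F | v 0 + v 1 = v 2})
    (hmul : (univ : Set F).Definable L {v : Fin 3 → F | v 0 * v 1 = v 2})
    {n : ℕ} (hn : ¬ HasBurdenAtLeast L F n)
    {X : Set F} (hX : (univ : Set F).Definable₁ L X) (hXinf : X.Infinite) :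
    Module.rank (Subfield.closure X) F < n := by
  refine not_le.1 fun hrank => hn ?_
  obtain ⟨a, ha⟩ := Module.le_rank_iff.1 hrank
  have hdef : (univ : Set F).DefinableFun L fun x : Fin n → F => ∑ i, x i * a i :=
    definableFun_sum hadd (mem_univ 0) (fun i => definableFun_op₂ hmul
      (DefinableFun.proj L) (L.definableFun_const _ (mem_univ (a i)))) _
  have hinj : InjOn (fun x : Fin n → F => ∑ i, x i * a i) (univ.pi fun _ => X) :=
    (injOn_sum_mul_of_linearIndependent ha).mono (pi_mono fun _ _ => Subfield.subset_closure)
  exact (IsInpPattern.of_injOn_univ_pi hdef (fun _ => hX) (fun _ => hXinf) hinj).hasBurdenAtLeast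

/-- If `L` extends the language of rings, `F` is a field which is an
`L`-structure interpreting the ring symbols standardly (so their graphs are `∅`-definable),
and `Th(F)` has finite burden, then for every definable infinite `X ⊆ F`, the field `F` is
finite-dimensional over the subfield generated by `X`. -/
theorem statement_0 {L : FirstOrder.Language.{u, v}} {F : Type w} [Field F] [L.Structure F]
    (hzero : (∅ : Set F).Definable₁ L {x : F | x = 0})
    (hone : (∅ : Set F).Definable₁ L {x : F | x = 1})
    (hneg : (∅ : Set F).Definable L {v : Fin 2 → F | v 1 = -v 0})
    (hadd : (∅ : Set F).Definable L {v : Fin 3 → F | v 0 + v 1 = v 2})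
    (hmul : (∅ : Set F).Definable L {v : Fin 3 → F | v 0 * v 1 = v 2})
    (hfb : HasFiniteBurden L F)
    (X : Set F) (hX : (Set.univ : Set F).Definable₁ L X) (hXinf : X.Infinite) :
    FiniteDimensional (Subfield.closure X) F := by
  obtain ⟨n, hn⟩ := hfb
  have hrank := statement_0_general (hadd.mono (empty_subset _)) (hmul.mono (empty_subset _))
    hn hX hXinf
  exact Module.rank_lt_aleph0_iff.1 (hrank.trans Cardinal.natCast_lt_aleph0)
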